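/- arXiv:2007.02059 — 3 statements merged into one kernel-verified Lean document; each statement's English description precedes it below -/
import Mathlib

section
/- Let k ≥ 1, 0 ≤ s ≤ k, and n ≥ 1 be integers. Suppose there exists a Gallai coloring of the complete graph on n vertices with colors from {1,...,k} containing no monochromatic copy of K4^+ in any color i ∈ {1,...,s} and no monochromatic copy of K3 in any color i ∈ {s+1,...,k}. Then there exists a Gallai coloring of the complete graph on 5n vertices with colors from {1,...,k+2} containing no monochromatic copy of K4^+ in any color i ∈ {1,...,s} and no monochromatic copy of K3 in any color i ∈ {s+1,...,k} ∪ {k+1, k+2}. -/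
/-- A symmetric edge-coloring function on the complete graph on `Fin n`. -/
def IsSym {n : ℕ} {α : Type*} (c : Fin n → Fin n → α) : Prop :=
  ∀ u v : Fin n, c u v = c v u

/-- A Gallai coloring: no triangle whose three edges get three distinct colors. -/
def NoRainbowTriangle {n : ℕ} {α : Type*} (c : Fin n → Fin n → α) : Prop :=
  ∀ u v w : Fin n, u ≠ v → u ≠ w → v ≠ w →
    c u v = c u w ∨ c u v = c v w ∨ c u w = c v w

/-- There is a monochromatic triangle in color `i`. -/
def HasMonoK3 {n : ℕ} {α : Type*} (c : Fin n → Fin n → α) (i : α) : Prop :=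
  ∃ a b d : Fin n, a ≠ b ∧ a ≠ d ∧ b ≠ d ∧
    c a b = i ∧ c a d = i ∧ c b d = i

/-- There is a monochromatic copy of `K₄⁺ = K₁ ∨ (K₃ + K₁)` in color `i`:
a vertex `x` joined to all of `a, b, d, e`, where `a b d` is a triangle
(equivalently `K₄` on `{x,a,b,d}` together with a pendant edge `x e`). -/
def HasMonoK4plus {n : ℕ} {α : Type*} (c : Fin n → Fin n → α) (i : α) : Prop :=
  ∃ x a b d e : Fin n,
    x ≠ a ∧ x ≠ b ∧ x ≠ d ∧ x ≠ e ∧ a ≠ b ∧ a ≠ d ∧ a ≠ e ∧ b ≠ d ∧ b ≠ e ∧ d ≠ e ∧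
    c x a = i ∧ c x b = i ∧ c x d = i ∧ c x e = i ∧
    c a b = i ∧ c a d = i ∧ c b d = i

/-- The pentagon/pentagram coloring of `K₅` with values `0, 1`. -/
def pent (a b : Fin 5) : ℕ := if b = a + 1 ∨ a = b + 1 then 0 else 1

theorem pent_symm : ∀ a b : Fin 5, pent a b = pent b a := by decide

theorem pent_le : ∀ a b : Fin 5, pent a b ≤ 1 := by decide

theorem pent_tri : ∀ a b d : Fin 5, a ≠ b → a ≠ d → b ≠ d →
    ¬ (pent a b = pent a d ∧ pent a b = pent b d) := by decide

theorem blowup_K5 (k s n : ℕ) (hk : 1 ≤ k) (hs : s ≤ k) (hn : 1 ≤ n)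
    (h : ∃ c : Fin n → Fin n → ℕ, IsSym c ∧
      (∀ u v : Fin n, u ≠ v → c u v ∈ Finset.Icc 1 k) ∧
      NoRainbowTriangle c ∧
      (∀ i ∈ Finset.Icc 1 s, ¬ HasMonoK4plus c i) ∧
      (∀ i ∈ Finset.Icc (s + 1) k, ¬ HasMonoK3 c i)) :
    ∃ c : Fin (5 * n) → Fin (5 * n) → ℕ, IsSym c ∧
      (∀ u v : Fin (5 * n), u ≠ v → c u v ∈ Finset.Icc 1 (k + 2)) ∧
      NoRainbowTriangle c ∧
      (∀ i ∈ (Finset.Icc 1 s : Finset ℕ), ¬ HasMonoK4plus c i) ∧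
      (∀ i ∈ (Finset.Icc (s + 1) k ∪ {k + 1, k + 2} : Finset ℕ), ¬ HasMonoK3 c i) := by
  obtain ⟨c, hsym, hcol, hgal, h4, h3⟩ := h
  obtain ⟨p, q, hpq⟩ : ∃ (p : Fin (5 * n) → Fin 5) (q : Fin (5 * n) → Fin n),
      ∀ u v, p u = p v → u ≠ v → q u ≠ q v := by
    refine ⟨fun u => (finProdFinEquiv.symm u).1, fun u => (finProdFinEquiv.symm u).2, ?_⟩
    intro u v h1 h2 h3
    exact h2 (finProdFinEquiv.symm.injective (Prod.ext h1 h3))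
  obtain ⟨C, hC⟩ : ∃ C : Fin (5 * n) → Fin (5 * n) → ℕ, ∀ u v,
      C u v = if p u = p v then c (q u) (q v) else k + 1 + pent (p u) (p v) :=
    ⟨_, fun _ _ => rfl⟩
  have hin : ∀ u v, p u = p v → C u v = c (q u) (q v) := fun u v e => by rw [hC, if_pos e]
  have hout : ∀ u v, p u ≠ p v → C u v = k + 1 + pent (p u) (p v) :=
    fun u v e => by rw [hC, if_neg e]
  have hle : ∀ u v, u ≠ v → p u = p v → 1 ≤ C u v ∧ C u v ≤ k := by
    intro u v huv e
    have := hcol _ _ (hpq u v e huv)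
    rw [hin u v e]
    exact Finset.mem_Icc.1 this
  have hsame : ∀ u v, C u v ≤ k → p u = p v := by
    intro u v e
    by_contra hne
    rw [hout u v hne] at e
    omega
  refine ⟨C, ?_, ?_, ?_, ?_, ?_⟩
  · intro u v
    by_cases e : p u = p v
    · rw [hin u v e, hin v u e.symm, hsym]
    · rw [hout u v e, hout v u (Ne.symm e), pent_symm]
  · intro u v huv
    rw [Finset.mem_Icc]
    by_cases e : p u = p v
    · have := hle u v huv e
      omega
    · have := pent_le (p u) (p v)
      rw [hout u v e]
      omega
  · intro u v w huv huw hvw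
    by_cases e1 : p u = p v
    · by_cases e2 : p u = p w
      · have e3 : p v = p w := e1.symm.trans e2
        rw [hin u v e1, hin u w e2, hin v w e3]
        exact hgal _ _ _ (hpq _ _ e1 huv) (hpq _ _ e2 huw) (hpq _ _ e3 hvw)
      · right; right
        rw [hout u w e2, hout v w (e1 ▸ e2), e1]
    · by_cases e2 : p u = p w
      · right; left
        have e3 : p v ≠ p w := fun e => e1 (e2.trans e.symm)
        rw [hout u v e1, hout v w e3, ← e2, pent_symm]
      · by_cases e3 : p v = p w
        · left
          rw [hout u v e1, hout u w e2, e3]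
        · rw [hout u v e1, hout u w e2, hout v w e3]
          have h1 := pent_le (p u) (p v)
          have h2 := pent_le (p u) (p w)
          have h3 := pent_le (p v) (p w)
          omega
  · rintro i hi ⟨x, a, b, d, e, xa, xb, xd, xe, ab, ad, ae, bd, be, de,
      cxa, cxb, cxd, cxe, cab, cad, cbd⟩
    have hik : i ≤ k := (Finset.mem_Icc.1 hi).2.trans hs
    have pa : p x = p a := hsame _ _ (cxa.trans_le hik)
    have pb : p x = p b := hsame _ _ (cxb.trans_le hik)
    have pd : p x = p d := hsame _ _ (cxd.trans_le hik)
    have pe : p x = p e := hsame _ _ (cxe.trans_le hik)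
    have pab := pa.symm.trans pb
    have pad := pa.symm.trans pd
    have pae := pa.symm.trans pe
    have pbd := pb.symm.trans pd
    have pbe := pb.symm.trans pe
    have pde := pd.symm.trans pe
    exact h4 i hi ⟨q x, q a, q b, q d, q e, hpq _ _ pa xa, hpq _ _ pb xb, hpq _ _ pd xd,
      hpq _ _ pe xe, hpq _ _ pab ab, hpq _ _ pad ad, hpq _ _ pae ae, hpq _ _ pbd bd,
      hpq _ _ pbe be, hpq _ _ pde de, (hin _ _ pa).symm.trans cxa, (hin _ _ pb).symm.trans cxb,
      (hin _ _ pd).symm.trans cxd, (hin _ _ pe).symm.trans cxe, (hin _ _ pab).symm.trans cab,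
      (hin _ _ pad).symm.trans cad, (hin _ _ pbd).symm.trans cbd⟩
  · rintro i hi ⟨a, b, d, ab, ad, bd, cab, cad, cbd⟩
    by_cases hik : i ≤ k
    · have hi' : i ∈ Finset.Icc (s + 1) k := by
        simp only [Finset.mem_union, Finset.mem_insert, Finset.mem_singleton] at hi
        rcases hi with hi | hi | hi
        · exact hi
        · omega
        · omega
      have pab : p a = p b := hsame _ _ (cab.trans_le hik)
      have pad : p a = p d := hsame _ _ (cad.trans_le hik)
      have pbd : p b = p d := hsame _ _ (cbd.trans_le hik)
      exact h3 i hi' ⟨q a, q b, q d, hpq _ _ pab ab, hpq _ _ pad ad, hpq _ _ pbd bd,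
        (hin _ _ pab).symm.trans cab, (hin _ _ pad).symm.trans cad,
        (hin _ _ pbd).symm.trans cbd⟩
    · have pab : p a ≠ p b := fun e => hik (cab ▸ (hle a b ab e).2)
      have pad : p a ≠ p d := fun e => hik (cad ▸ (hle a d ad e).2)
      have pbd : p b ≠ p d := fun e => hik (cbd ▸ (hle b d bd e).2)
      rw [hout _ _ pab] at cab
      rw [hout _ _ pad] at cad
      rw [hout _ _ pbd] at cbd
      exact pent_tri _ _ _ pab pad pbd ⟨by omega, by omega⟩
end

section
/- Let k ≥ 1, 0 ≤ s ≤ k, and n ≥ 1 be integers. Suppose there exists a Gallai coloring of the complete graph on n vertices with colors from {1,...,k} containing no monochromatic copy of K4^+ in any color i ∈ {1,...,s} and no monochromatic copy of K3 in any color i ∈ {s+1,...,k}. Then there exists a Gallai coloring of the complete graph on 8n vertices with colors from {1,...,k+2} containing no monochromatic copy of K4^+ in any color i ∈ {1,...,s} ∪ {k+1} and no monochromatic copy of K3 in any color i ∈ {s+1,...,k} ∪ {k+2}. -/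
/-- Blue edges of the 2-coloring of `K₈`: the Wagner graph (differences 1, 4, 7 mod 8). -/
def wagner (x y : Fin 8) : Bool :=
  (x - y = 1) || (x - y = 4) || (x - y = 7)

theorem wagner_symm : ∀ x y : Fin 8, wagner x y = wagner y x := by decide

theorem wagner_no_triangle : ∀ x y z : Fin 8,
    wagner x y = true → wagner x z = true → wagner y z = true → False := by decide

set_option maxRecDepth 100000 in
set_option maxHeartbeats 4000000 in
theorem wagner_no_indep : ∀ x y : Fin 8, x ≠ y → wagner x y = false →
    ∀ z : Fin 8, x ≠ z → y ≠ z → wagner x z = false → wagner y z = false →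
    ∀ w : Fin 8, x ≠ w → y ≠ w → z ≠ w →
    wagner x w = false → wagner y w = false → wagner z w = false → False := by decide

/-- The blow-up coloring. -/
def blowCol (k : ℕ) {n : ℕ} (c : Fin n → Fin n → ℕ) (u v : Fin 8 × Fin n) : ℕ :=
  if u.1 = v.1 then c u.2 v.2 else if wagner u.1 v.1 then k + 2 else k + 1

theorem blowup_K8 (k s n : ℕ) (hk : 1 ≤ k) (hs : s ≤ k) (hn : 1 ≤ n)
    (h : ∃ c : Fin n → Fin n → ℕ, IsSym c ∧
      (∀ u v : Fin n, u ≠ v → c u v ∈ Finset.Icc 1 k) ∧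
      NoRainbowTriangle c ∧
      (∀ i ∈ Finset.Icc 1 s, ¬ HasMonoK4plus c i) ∧
      (∀ i ∈ Finset.Icc (s + 1) k, ¬ HasMonoK3 c i)) :
    ∃ c : Fin (8 * n) → Fin (8 * n) → ℕ, IsSym c ∧
      (∀ u v : Fin (8 * n), u ≠ v → c u v ∈ Finset.Icc 1 (k + 2)) ∧
      NoRainbowTriangle c ∧
      (∀ i ∈ (Finset.Icc 1 s ∪ {k + 1} : Finset ℕ), ¬ HasMonoK4plus c i) ∧
      (∀ i ∈ (Finset.Icc (s + 1) k ∪ {k + 2} : Finset ℕ), ¬ HasMonoK3 c i) := by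
  obtain ⟨c, hsym, hcol, hgal, h4, h3⟩ := h
  let f : Fin (8 * n) → Fin 8 × Fin n := finProdFinEquiv.symm
  have hf : Function.Injective f := finProdFinEquiv.symm.injective
  have hne : ∀ u v, u ≠ v → (f u).1 = (f v).1 → (f u).2 ≠ (f v).2 :=
    fun u v huv h1 h2 => huv (hf (Prod.ext h1 h2))
  have same : ∀ u v, (f u).1 = (f v).1 → blowCol k c (f u) (f v) = c (f u).2 (f v).2 := by
    intro u v h1
    simp [blowCol, h1]
  have low : ∀ u v i, i ≤ k → blowCol k c (f u) (f v) = i →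
      (f u).1 = (f v).1 ∧ c (f u).2 (f v).2 = i := by
    intro u v i hi h1
    unfold blowCol at h1
    split_ifs at h1 with h2 h3
    · exact ⟨h2, h1⟩
    · omega
    · omega
  have mem : ∀ u v, u ≠ v → (f u).1 = (f v).1 →
      1 ≤ c (f u).2 (f v).2 ∧ c (f u).2 (f v).2 ≤ k := by
    intro u v huv h1
    exact Finset.mem_Icc.1 (hcol _ _ (hne u v huv h1))
  have red : ∀ u v, u ≠ v → blowCol k c (f u) (f v) = k + 1 →
      (f u).1 ≠ (f v).1 ∧ wagner (f u).1 (f v).1 = false := by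
    intro u v huv h1
    unfold blowCol at h1
    split_ifs at h1 with h2 h3
    · have := mem u v huv h2
      omega
    · omega
    · exact ⟨h2, by simpa using h3⟩
  have blue : ∀ u v, u ≠ v → blowCol k c (f u) (f v) = k + 2 →
      wagner (f u).1 (f v).1 = true := by
    intro u v huv h1
    unfold blowCol at h1
    split_ifs at h1 with h2 h3
    · have := mem u v huv h2
      omega
    · exact h3
    · omega
  refine ⟨fun u v => blowCol k c (f u) (f v), ?_, ?_, ?_, ?_, ?_⟩
  · intro u v
    simp only [blowCol, eq_comm (a := (f u).1), wagner_symm (f u).1, hsym (f u).2]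
  · intro u v huv
    rw [Finset.mem_Icc]
    by_cases h1 : (f u).1 = (f v).1
    · have := mem u v huv h1
      have := same u v h1
      dsimp only
      omega
    · simp only [blowCol, if_neg h1]
      split_ifs <;> omega
  · intro u v w huv huw hvw
    dsimp only
    by_cases h1 : (f u).1 = (f v).1
    · by_cases h2 : (f u).1 = (f w).1
      · have h5 : (f v).1 = (f w).1 := h1.symm.trans h2
        rw [same u v h1, same u w h2, same v w h5]
        exact hgal _ _ _ (hne u v huv h1) (hne u w huw h2) (hne v w hvw h5)
      · right; right
        have h5 : (f v).1 ≠ (f w).1 := h1 ▸ h2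
        simp only [blowCol, if_neg h2, if_neg h5, h1]
    · by_cases h2 : (f u).1 = (f w).1
      · right; left
        have h5 : (f v).1 ≠ (f w).1 := fun h => h1 (h2.trans h.symm)
        simp only [blowCol, if_neg h5, if_neg h5.symm, wagner_symm (f v).1 (f w).1, h2]
      · by_cases h5 : (f v).1 = (f w).1
        · left
          simp only [blowCol, if_neg h1, if_neg h2, h5]
        · simp only [blowCol, if_neg h1, if_neg h2, if_neg h5]
          split_ifs <;> simp
  · rintro i hi ⟨x, a, b, d, e, xa, xb, xd, xe, ab, ad, ae, bd, be, de,
      cxa, cxb, cxd, cxe, cab, cad, cbd⟩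
    rw [Finset.mem_union, Finset.mem_singleton] at hi
    rcases hi with hi | rfl
    · have hik : i ≤ k := (Finset.mem_Icc.1 hi).2.trans hs
      obtain ⟨pa, qxa⟩ := low _ _ i hik cxa
      obtain ⟨pb, qxb⟩ := low _ _ i hik cxb
      obtain ⟨pd, qxd⟩ := low _ _ i hik cxd
      obtain ⟨pe, qxe⟩ := low _ _ i hik cxe
      obtain ⟨pab, qab⟩ := low _ _ i hik cab
      obtain ⟨pad, qad⟩ := low _ _ i hik cad
      obtain ⟨pbd, qbd⟩ := low _ _ i hik cbd
      exact h4 i hi ⟨_, _, _, _, _, hne _ _ xa pa, hne _ _ xb pb, hne _ _ xd pd, hne _ _ xe pe,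
        hne _ _ ab pab, hne _ _ ad pad, hne _ _ ae (pa.symm.trans pe), hne _ _ bd pbd,
        hne _ _ be (pb.symm.trans pe), hne _ _ de (pd.symm.trans pe),
        qxa, qxb, qxd, qxe, qab, qad, qbd⟩
    · obtain ⟨pa, qxa⟩ := red _ _ xa cxa
      obtain ⟨pb, qxb⟩ := red _ _ xb cxb
      obtain ⟨pd, qxd⟩ := red _ _ xd cxd
      obtain ⟨pab, qab⟩ := red _ _ ab cab
      obtain ⟨pad, qad⟩ := red _ _ ad cad
      obtain ⟨pbd, qbd⟩ := red _ _ bd cbd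
      exact wagner_no_indep _ _ pa qxa _ pb pab qxb qab _ pd pad pbd qxd qad qbd
  · rintro i hi ⟨a, b, d, ab, ad, bd, cab, cad, cbd⟩
    rw [Finset.mem_union, Finset.mem_singleton] at hi
    rcases hi with hi | rfl
    · have hik : i ≤ k := (Finset.mem_Icc.1 hi).2
      obtain ⟨pab, qab⟩ := low _ _ i hik cab
      obtain ⟨pad, qad⟩ := low _ _ i hik cad
      obtain ⟨pbd, qbd⟩ := low _ _ i hik cbd
      exact h3 i hi ⟨_, _, _, hne _ _ ab pab, hne _ _ ad pad, hne _ _ bd pbd, qab, qad, qbd⟩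
    · exact wagner_no_triangle _ _ _ (blue _ _ ab cab) (blue _ _ ad cad) (blue _ _ bd cbd)
end

section
/- Let k ≥ 1, 0 ≤ s ≤ k, and n ≥ 1 be integers. Suppose there exists a Gallai coloring of the complete graph on n vertices with colors from {1,...,k} containing no monochromatic copy of K4^+ in any color i ∈ {1,...,s} and no monochromatic copy of K3 in any color i ∈ {s+1,...,k}. Then there exists a Gallai coloring of the complete graph on 4n vertices with colors from {1,...,k+1} containing no monochromatic copy of K4^+ in any color i ∈ {1,...,s} ∪ {k+1} and no monochromatic copy of K3 in any color i ∈ {s+1,...,k}. -/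
/-- Quadratic residues modulo 17 (Paley graph). -/
def palQ (a : Fin 17) : Bool :=
  a = 1 || a = 2 || a = 4 || a = 8 || a = 9 || a = 13 || a = 15 || a = 16

lemma palQ_symm (a b : Fin 17) : palQ (a - b) = palQ (b - a) := by
  revert a b; decide

set_option maxRecDepth 100000 in
lemma palQ_free0 : ∀ y : Fin 17, palQ y = true → ∀ z : Fin 17, palQ z = true →
    palQ (y - z) = true → ∀ w : Fin 17, palQ w = true → palQ (y - w) = true →
    palQ (z - w) = true → False := by decide

set_option maxRecDepth 100000 in
lemma palN_free0 : ∀ y : Fin 17, y ≠ 0 → palQ y = false → ∀ z : Fin 17, z ≠ 0 → palQ z = false →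
    y - z ≠ 0 → palQ (y - z) = false → ∀ w : Fin 17, w ≠ 0 → palQ w = false → y - w ≠ 0 →
    palQ (y - w) = false → z - w ≠ 0 → palQ (z - w) = false → False := by decide

/-- Neither the Paley graph nor its complement contains a `K₄`. -/
lemma pal_free (t : Bool) (x a b d : Fin 17) (h1 : x ≠ a) (h2 : x ≠ b) (h3 : x ≠ d)
    (h4 : a ≠ b) (h5 : a ≠ d) (h6 : b ≠ d) (e1 : palQ (x - a) = t) (e2 : palQ (x - b) = t)
    (e3 : palQ (x - d) = t) (e4 : palQ (a - b) = t) (e5 : palQ (a - d) = t)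
    (e6 : palQ (b - d) = t) : False := by
  have k4 : (x - a) - (x - b) = b - a := by abel
  have k5 : (x - a) - (x - d) = d - a := by abel
  have k6 : (x - b) - (x - d) = d - b := by abel
  rw [palQ_symm] at e4 e5 e6
  cases t
  · exact palN_free0 (x - a) (sub_ne_zero.2 h1) e1 (x - b) (sub_ne_zero.2 h2) e2
      (by rw [k4]; exact sub_ne_zero.2 h4.symm) (by rw [k4]; exact e4) (x - d)
      (sub_ne_zero.2 h3) e3 (by rw [k5]; exact sub_ne_zero.2 h5.symm) (by rw [k5]; exact e5)
      (by rw [k6]; exact sub_ne_zero.2 h6.symm) (by rw [k6]; exact e6)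
  · exact palQ_free0 (x - a) e1 (x - b) e2 (by rw [k4]; exact e4) (x - d) e3
      (by rw [k5]; exact e5) (by rw [k6]; exact e6)

/-- `u` lies in a monochromatic `K₄` of color `i`. -/
def InK4 {n : ℕ} (c : Fin n → Fin n → ℕ) (u : Fin n) (i : ℕ) : Prop :=
  ∃ a b d : Fin n, u ≠ a ∧ u ≠ b ∧ u ≠ d ∧ a ≠ b ∧ a ≠ d ∧ b ≠ d ∧
    c u a = i ∧ c u b = i ∧ c u d = i ∧ c a b = i ∧ c a d = i ∧ c b d = i

lemma InK4.nbr {n : ℕ} {c : Fin n → Fin n → ℕ} {u a b d v : Fin n} {i : ℕ}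
    (hp : ¬ HasMonoK4plus c i)
    (h : u ≠ a ∧ u ≠ b ∧ u ≠ d ∧ a ≠ b ∧ a ≠ d ∧ b ≠ d ∧
    c u a = i ∧ c u b = i ∧ c u d = i ∧ c a b = i ∧ c a d = i ∧ c b d = i)
    (hv : u ≠ v) (huv : c u v = i) : v = a ∨ v = b ∨ v = d := by
  by_contra! hne
  obtain ⟨h1, h2, h3, h4, h5, h6, e1, e2, e3, e4, e5, e6⟩ := h
  exact hp ⟨u, a, b, d, v, h1, h2, h3, hv, h4, h5, hne.1.symm, h6, hne.2.1.symm, hne.2.2.symm,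
    e1, e2, e3, huv, e4, e5, e6⟩

lemma InK4.move {n : ℕ} {c : Fin n → Fin n → ℕ} (hsym : IsSym c) {u v : Fin n} {i : ℕ}
    (hp : ¬ HasMonoK4plus c i) (h : InK4 c u i) (hv : u ≠ v) (huv : c u v = i) : InK4 c v i := by
  obtain ⟨a, b, d, h⟩ := h
  have hh := InK4.nbr hp h hv huv
  obtain ⟨h1, h2, h3, h4, h5, h6, e1, e2, e3, e4, e5, e6⟩ := h
  have s1 := hsym u a
  have s2 := hsym u b
  have s3 := hsym u d
  have s4 := hsym a b
  have s5 := hsym a d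
  have s6 := hsym b d
  rcases hh with rfl | rfl | rfl
  · exact ⟨u, b, d, by grind⟩
  · exact ⟨u, a, d, by grind⟩
  · exact ⟨u, a, b, by grind⟩

lemma InK4.closed {n : ℕ} {c : Fin n → Fin n → ℕ} (hsym : IsSym c) {u v w : Fin n} {i : ℕ}
    (hp : ¬ HasMonoK4plus c i) (h : InK4 c u i) (hv : u ≠ v) (huv : c u v = i)
    (hw : v ≠ w) (hvw : c v w = i) : u = w ∨ c u w = i := by
  have hv' := h.move hsym hp hv huv
  obtain ⟨a, b, d, h⟩ := hv'
  have m1 := InK4.nbr hp h hw hvw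
  have m2 := InK4.nbr hp h hv.symm (by rw [hsym]; exact huv)
  obtain ⟨h1, h2, h3, h4, h5, h6, e1, e2, e3, e4, e5, e6⟩ := h
  have s4 := hsym a b
  have s5 := hsym a d
  have s6 := hsym b d
  grind

lemma InK4.unique {n : ℕ} {c : Fin n → Fin n → ℕ} (hsym : IsSym c) (hg : NoRainbowTriangle c)
    {u : Fin n} {i j : ℕ} (hi : ¬ HasMonoK4plus c i) (hj : ¬ HasMonoK4plus c j)
    (h : InK4 c u i) (h' : InK4 c u j) : i = j := by
  by_contra hne
  have H := h
  have H' := h'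
  obtain ⟨a, b, d, ha⟩ := h
  obtain ⟨a', b', d', ha'⟩ := h'
  have n1 : u ≠ a := ha.1
  have n2 : u ≠ a' := ha'.1
  have e1 : c u a = i := ha.2.2.2.2.2.2.1
  have e2 : c u a' = j := ha'.2.2.2.2.2.2.1
  have n3 : a ≠ a' := by rintro rfl; exact hne (e1.symm.trans e2)
  have s := hsym a a'
  clear ha ha'
  rcases hg u a a' n1 n2 n3 with h | h | h
  · omega
  · rcases H.closed hsym hi n1 e1 n3 (by omega) with h | h
    · exact n2 h
    · omega
  · rcases H'.closed hsym hj n2 e2 n3.symm (by omega) with h | h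
    · exact n1 h
    · omega

/-- Structure: color label and position label for the monochromatic `K₄` components. -/
lemma exists_labels {n k s : ℕ} (c : Fin n → Fin n → ℕ) (hsym : IsSym c)
    (hc : ∀ u v : Fin n, u ≠ v → c u v ∈ Finset.Icc 1 k) (hg : NoRainbowTriangle c)
    (hp : ∀ i ∈ Finset.Icc 1 s, ¬ HasMonoK4plus c i) :
    ∃ (col : Fin n → ℕ) (f : Fin n → Fin 4),
      (∀ u, col u ≤ s) ∧
      (∀ u v, u ≠ v → c u v = col u → col v = col u) ∧
      (∀ u v w, u ≠ v → c u v = col u → v ≠ w → c v w = col u → u = w ∨ c u w = col u) ∧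
      (∀ u i, i ∈ Finset.Icc 1 s → InK4 c u i → col u = i) ∧
      (∀ u v, u ≠ v → c u v = col u → f u ≠ f v) := by
  classical
  have key : ∀ u, ∃ i, i ≤ s ∧ (i ≠ 0 → InK4 c u i) ∧
      (∀ j ∈ Finset.Icc 1 s, InK4 c u j → i = j) := by
    intro u
    by_cases h : ∃ i ∈ Finset.Icc 1 s, InK4 c u i
    · obtain ⟨i, hi, h⟩ := h
      exact ⟨i, (Finset.mem_Icc.1 hi).2, fun _ => h,
        fun j hj h' => InK4.unique hsym hg (hp i hi) (hp j hj) h h'⟩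
    · exact ⟨0, Nat.zero_le _, fun h => absurd rfl h, fun j hj h' => absurd ⟨j, hj, h'⟩ h⟩
  choose col hs hK hU using key
  have pos : ∀ u v, u ≠ v → c u v = col u → col u ∈ Finset.Icc 1 s ∧ InK4 c u (col u) := by
    intro u v huv h
    have := Finset.mem_Icc.1 (hc u v huv)
    exact ⟨Finset.mem_Icc.2 ⟨by omega, hs u⟩, hK u (by omega)⟩
  have colc : ∀ u v, u ≠ v → c u v = col u → col v = col u := by
    intro u v huv h
    obtain ⟨h1, h2⟩ := pos u v huv h
    exact hU v _ h1 (h2.move hsym (hp _ h1) huv h)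
  have trn : ∀ u v w, u ≠ v → c u v = col u → v ≠ w → c v w = col u →
      u = w ∨ c u w = col u := by
    intro u v w huv h hvw h'
    obtain ⟨h1, h2⟩ := pos u v huv h
    exact h2.closed hsym (hp _ h1) huv h hvw h'
  let S : Fin n → Finset (Fin n) := fun u => Finset.univ.filter fun v => v < u ∧ c u v = col u
  have hS : ∀ u, (S u).card < 4 := by
    intro u
    by_cases h : ∃ v, u ≠ v ∧ c u v = col u
    · obtain ⟨v, huv, h⟩ := h
      obtain ⟨h1, a, b, d, h2⟩ := pos u v huv h
      have : S u ⊆ {a, b, d} := by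
        intro w hw
        simp only [S, Finset.mem_filter, Finset.mem_univ, true_and] at hw
        simpa using InK4.nbr (hp _ h1) h2 hw.1.ne' hw.2
      exact lt_of_le_of_lt ((Finset.card_le_card this).trans Finset.card_le_three) (by norm_num)
    · have : S u = ∅ := by
        ext w
        simp only [S, Finset.mem_filter, Finset.mem_univ, true_and, Finset.notMem_empty, iff_false]
        exact fun hw => h ⟨w, hw.1.ne', hw.2⟩
      rw [this]; simp
  have lt : ∀ u v, u < v → c u v = col u → (S u).card < (S v).card := by
    intro u v huv h
    have hcv := colc u v huv.ne h
    have hvu : c v u = col v := by rw [hsym, hcv, h]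
    apply Finset.card_lt_card
    rw [Finset.ssubset_iff]
    refine ⟨u, by simp [S], ?_⟩
    intro w hw
    simp only [S, Finset.mem_insert, Finset.mem_filter, Finset.mem_univ, true_and] at hw ⊢
    rcases hw with rfl | ⟨hw, e⟩
    · exact ⟨huv, hvu⟩
    · refine ⟨hw.trans huv, ?_⟩
      rcases trn v u w huv.ne' hvu hw.ne' (by rw [e, hcv]) with h' | h'
      · exact absurd h' (hw.trans huv).ne'
      · exact h'
  refine ⟨col, fun u => ⟨(S u).card, hS u⟩, hs, colc, trn, fun u i hi h => hU u i hi h, ?_⟩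
  intro u v huv h he
  have he' : (S u).card = (S v).card := by simpa using he
  rcases lt_or_gt_of_ne huv with hl | hl
  · have := lt u v hl h; omega
  · have := lt v u hl (by rw [hsym, colc u v huv h, h]); omega

/-- Position of a new vertex in the Paley graph. -/
def palPos (p q : Fin 4) : Fin 17 := ⟨4 * p.1 + q.1, by omega⟩

lemma palPos_inj {p q p' q' : Fin 4} (h : palPos p q = palPos p' q') : p = p' ∧ q = q' := by
  simp only [palPos, Fin.mk.injEq] at h
  omega

/-- The new coloring. -/
def newCol {n : ℕ} (c : Fin n → Fin n → ℕ) (k : ℕ) (col : Fin n → ℕ) (f : Fin n → Fin 4)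
    (x y : Fin 4 × Fin n) : ℕ :=
  if x.2 = y.2 ∨ c x.2 y.2 = col x.2 then
    if col x.2 ≠ 0 ∧ palQ (palPos (f x.2) x.1 - palPos (f y.2) y.1) = true then col x.2 else k + 1
  else c x.2 y.2

theorem blowup_K4 (k s n : ℕ) (hk : 1 ≤ k) (hs : s ≤ k) (hn : 1 ≤ n)
    (h : ∃ c : Fin n → Fin n → ℕ, IsSym c ∧
      (∀ u v : Fin n, u ≠ v → c u v ∈ Finset.Icc 1 k) ∧
      NoRainbowTriangle c ∧
      (∀ i ∈ Finset.Icc 1 s, ¬ HasMonoK4plus c i) ∧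
      (∀ i ∈ Finset.Icc (s + 1) k, ¬ HasMonoK3 c i)) :
    ∃ c : Fin (4 * n) → Fin (4 * n) → ℕ, IsSym c ∧
      (∀ u v : Fin (4 * n), u ≠ v → c u v ∈ Finset.Icc 1 (k + 1)) ∧
      NoRainbowTriangle c ∧
      (∀ i ∈ (Finset.Icc 1 s ∪ {k + 1} : Finset ℕ), ¬ HasMonoK4plus c i) ∧
      (∀ i ∈ (Finset.Icc (s + 1) k : Finset ℕ), ¬ HasMonoK3 c i) := by
  obtain ⟨c, hsym, hc, hg, hp, h3⟩ := h
  obtain ⟨col, f, hcs, hcc, htr, hK, hf⟩ := exists_labels c hsym hc hg hp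
  let B : Fin n → Fin n → Prop := fun u v => u = v ∨ c u v = col u
  have Bcol : ∀ {u v}, B u v → col v = col u := by
    intro u v h
    by_cases e : u = v
    · rw [e]
    · exact hcc u v e (h.resolve_left e)
  have Bsymm : ∀ {u v}, B u v → B v u := by
    intro u v h
    have := Bcol h
    rcases h with h | h
    · exact Or.inl h.symm
    · right; rw [hsym, this, h]
  have Btrans : ∀ {u v w}, B u v → B v w → B u w := by
    intro u v w h h'
    have e := Bcol h
    by_cases e1 : u = v
    · rw [e1]; exact h'
    by_cases e2 : v = w
    · rw [← e2]; exact h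
    exact htr u v w e1 (h.resolve_left e1) e2 (by rw [← e]; exact h'.resolve_left e2)
  have Bmod : ∀ {u v w}, B u v → ¬ B u w → c u w = c v w := by
    intro u v w h h'
    by_cases e1 : u = v
    · rw [e1]
    have nvw : ¬ B v w := fun h2 => h' (Btrans h h2)
    have e := Bcol h
    have h1 := h.resolve_left e1
    simp only [B, not_or] at h' nvw
    rcases hg u v w e1 h'.1 nvw.1 with h2 | h2 | h2
    · exact absurd (h2.symm.trans h1) h'.2
    · exact absurd (h2.symm.trans (h1.trans e.symm)) nvw.2
    · exact h2
  let F := newCol c k col f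
  let P : Fin 4 × Fin n → Fin 17 := fun x => palPos (f x.2) x.1
  have Fn : ∀ x y, ¬ B x.2 y.2 → F x y = c x.2 y.2 := fun x y h => if_neg h
  have Fb : ∀ x y, B x.2 y.2 → F x y =
      if col x.2 ≠ 0 ∧ palQ (P x - P y) = true then col x.2 else k + 1 := fun x y h => if_pos h
  have Pinj : ∀ x y, B x.2 y.2 → x ≠ y → P x ≠ P y := by
    intro x y h hxy e
    obtain ⟨e1, e2⟩ := palPos_inj e
    by_cases e3 : x.2 = y.2
    · exact hxy (Prod.ext e2 e3)
    · exact hf _ _ e3 (h.resolve_left e3) e1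
  have Fsym : ∀ x y, F x y = F y x := by
    intro x y
    by_cases h : B x.2 y.2
    · rw [Fb x y h, Fb y x (Bsymm h), Bcol h, palQ_symm]
    · rw [Fn x y h, Fn y x (fun h' => h (Bsymm h')), hsym]
  have Fbv : ∀ x y, B x.2 y.2 → (F x y = col x.2 ∧ col x.2 ≠ 0) ∨ F x y = k + 1 := by
    intro x y h
    rw [Fb x y h]
    split_ifs with h1
    · exact Or.inl ⟨rfl, h1.1⟩
    · exact Or.inr rfl
  have cne : ∀ u v, ¬ B u v → 1 ≤ c u v ∧ c u v ≤ k ∧ c u v ≠ col u := by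
    intro u v h
    have h' := h
    simp only [B, not_or] at h'
    have := Finset.mem_Icc.1 (hc u v h'.1)
    exact ⟨this.1, this.2, h'.2⟩
  have BofTop : ∀ x y, F x y = k + 1 → B x.2 y.2 := by
    intro x y h
    by_contra hb
    have := cne _ _ hb
    rw [Fn x y hb] at h
    omega
  have BofCol : ∀ x y, F x y = col x.2 → B x.2 y.2 := by
    intro x y h
    by_contra hb
    have := cne _ _ hb
    rw [Fn x y hb] at h
    omega
  -- no monochromatic K4 inside a special block
  have noK4 : ∀ x a b d : Fin 4 × Fin n, ∀ i, col x.2 ≠ 0 → B x.2 a.2 → B x.2 b.2 → B x.2 d.2 →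
      x ≠ a → x ≠ b → x ≠ d → a ≠ b → a ≠ d → b ≠ d → F x a = i → F x b = i → F x d = i →
      F a b = i → F a d = i → F b d = i → False := by
    intro x a b d i h0 ha hb hd n1 n2 n3 n4 n5 n6 e1 e2 e3 e4 e5 e6
    have hab := Btrans (Bsymm ha) hb
    have had := Btrans (Bsymm ha) hd
    have hbd := Btrans (Bsymm hb) hd
    have hx := hcs x.2
    have ca := Bcol ha
    have cb := Bcol hb
    have val : ∀ y z, col y.2 = col x.2 → B y.2 z.2 → F y z = i →
        palQ (P y - P z) = decide (i = col x.2) := by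
      intro y z hy hyz e
      rw [Fb y z hyz, hy] at e
      by_cases hq : palQ (P y - P z) = true
      · rw [if_pos ⟨h0, hq⟩] at e
        simp [hq, e]
      · rw [if_neg (fun h => hq h.2)] at e
        have : i ≠ col x.2 := by omega
        simp [hq, this]
    exact pal_free _ (P x) (P a) (P b) (P d) (Pinj _ _ ha n1) (Pinj _ _ hb n2) (Pinj _ _ hd n3)
      (Pinj _ _ hab n4) (Pinj _ _ had n5) (Pinj _ _ hbd n6) (val _ _ rfl ha e1)
      (val _ _ rfl hb e2) (val _ _ rfl hd e3) (val _ _ ca hab e4) (val _ _ ca had e5)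
      (val _ _ cb hbd e6)
  have Frange : ∀ x y, F x y ∈ Finset.Icc 1 (k + 1) := by
    intro x y
    rw [Finset.mem_Icc]
    have := hcs x.2
    by_cases h : B x.2 y.2
    · rcases Fbv x y h with h | h <;> omega
    · have := cne _ _ h
      rw [Fn x y h]
      omega
  have Frain : ∀ x y z, F x y = F x z ∨ F x y = F y z ∨ F x z = F y z := by
    intro x y z
    by_cases h1 : B x.2 y.2
    · by_cases h2 : B x.2 z.2
      · have h4 := Btrans (Bsymm h1) h2
        have := Bcol h1
        have v1 := Fbv x y h1
        have v2 := Fbv x z h2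
        have v3 := Fbv y z h4
        omega
      · right; right
        rw [Fn x z h2, Fn y z (fun h => h2 (Btrans h1 h))]
        exact Bmod h1 h2
    · by_cases h2 : B x.2 z.2
      · right; left
        rw [Fsym y z, Fn x y h1, Fn z y (fun h => h1 (Btrans h2 h))]
        exact Bmod h2 h1
      · by_cases h4 : B y.2 z.2
        · left
          rw [Fsym x y, Fsym x z, Fn y x (fun h => h1 (Bsymm h)), Fn z x (fun h => h2 (Bsymm h))]
          exact Bmod h4 (fun h => h1 (Bsymm h))
        · rw [Fn x y h1, Fn x z h2, Fn y z h4]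
          simp only [B, not_or] at h1 h2 h4
          exact hg _ _ _ h1.1 h2.1 h4.1
  let e : Fin (4 * n) → Fin 4 × Fin n := fun a => finProdFinEquiv.symm a
  have einj : ∀ {a b}, a ≠ b → e a ≠ e b := fun h h' => h (finProdFinEquiv.symm.injective h')
  refine ⟨fun a b => F (e a) (e b), fun a b => Fsym _ _, fun a b _ => Frange _ _,
    fun a b d _ _ _ => Frain _ _ _, ?_, ?_⟩
  · rintro i hi ⟨x, a, b, d, g, n1, n2, n3, n4, n5, n6, n7, n8, n9, n10, e1, e2, e3, e4, e5, e6, e7⟩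
    dsimp only at e1 e2 e3 e4 e5 e6 e7
    replace n1 := einj n1
    replace n2 := einj n2
    replace n3 := einj n3
    replace n4 := einj n4
    replace n5 := einj n5
    replace n6 := einj n6
    replace n7 := einj n7
    replace n8 := einj n8
    replace n9 := einj n9
    replace n10 := einj n10
    generalize e x = x at *
    generalize e a = a at *
    generalize e b = b at *
    generalize e d = d at *
    generalize e g = g at *
    rw [Finset.mem_union, Finset.mem_singleton] at hi
    rcases hi with hi | rfl
    · have hi' := Finset.mem_Icc.1 hi
      by_cases hx : col x.2 = i
      · subst hx
        exact noK4 x a b d _ (by omega) (BofCol _ _ e1) (BofCol _ _ e2) (BofCol _ _ e3)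
          n1 n2 n3 n5 n6 n8 e1 e2 e3 e5 e6 e7
      · have nx : ∀ y, F x y = i → ¬ B x.2 y.2 := by
          intro y hy hb
          have := Fbv x y hb
          omega
        have ny : ∀ y z, F x y = i → F y z = i → ¬ B y.2 z.2 := by
          intro y z hy hyz hb
          have h1 := Fbv y z hb
          have h2 : B y.2 x.2 := BofCol y x (by rw [Fsym]; omega)
          exact nx y hy (Bsymm h2)
        have b1 := nx a e1
        have b2 := nx b e2
        have b3 := nx d e3
        have b4 := ny a b e1 e5
        have b5 := ny a d e1 e6
        have b6 := ny b d e2 e7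
        rw [Fn _ _ b1] at e1
        rw [Fn _ _ b2] at e2
        rw [Fn _ _ b3] at e3
        rw [Fn _ _ b4] at e5
        rw [Fn _ _ b5] at e6
        rw [Fn _ _ b6] at e7
        simp only [B, not_or] at b1 b2 b3 b4 b5 b6
        exact hx (hK x.2 i hi ⟨a.2, b.2, d.2, b1.1, b2.1, b3.1, b4.1, b5.1, b6.1,
          e1, e2, e3, e5, e6, e7⟩)
    · have b1 := BofTop _ _ e1
      have b2 := BofTop _ _ e2
      have b3 := BofTop _ _ e3
      have b4 := BofTop _ _ e4
      by_cases hx : col x.2 = 0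
      · have same : ∀ y : Fin 4 × Fin n, B x.2 y.2 → x.2 = y.2 := by
          intro y h
          by_contra hne
          have h1 := h.resolve_left hne
          have := Finset.mem_Icc.1 (hc _ _ hne)
          omega
        have s1 := same a b1
        have s2 := same b b2
        have s3 := same d b3
        have s4 := same g b4
        obtain ⟨x1, x2⟩ := x
        obtain ⟨a1, a2⟩ := a
        obtain ⟨b1', b2'⟩ := b
        obtain ⟨d1, d2⟩ := d
        obtain ⟨g1, g2⟩ := g
        dsimp only at s1 s2 s3 s4
        subst s1 s2 s3 s4
        simp only [ne_eq, Prod.mk.injEq, and_true] at n1 n2 n3 n4 n5 n6 n7 n8 n9 n10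
        omega
      · exact noK4 x a b d _ hx b1 b2 b3 n1 n2 n3 n5 n6 n8 e1 e2 e3 e5 e6 e7
  · rintro i hi ⟨a, b, d, n1, n2, n3, e1, e2, e3⟩
    have hi' := Finset.mem_Icc.1 hi
    have nb : ∀ x y, F x y = i → ¬ B x.2 y.2 := by
      intro x y hxy hb
      have h1 := Fbv x y hb
      have h2 := hcs x.2
      omega
    dsimp only at e1 e2 e3
    have b1 := nb _ _ e1
    have b2 := nb _ _ e2
    have b3 := nb _ _ e3
    rw [Fn _ _ b1] at e1
    rw [Fn _ _ b2] at e2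
    rw [Fn _ _ b3] at e3
    simp only [B, not_or] at b1 b2 b3
    exact h3 i hi ⟨_, _, _, b1.1, b2.1, b3.1, e1, e2, e3⟩
end
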